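/- arXiv:1311.0576 — 10 statements merged into one kernel-verified Lean document; each statement's English description precedes it below -/
import Mathlib

section
/- Fix θ > 0, u ≥ 0 and b < 1. Let A ∈ ℝ^{m×n}, y ∈ ℝ^m, x̃ ∈ ℝⁿ, and suppose (x*, r*) ∈ ℝⁿ × ℝ^m is a fixed point of the GENP-AMP iteration with these fixed parameters, i.e. x*_i = η( (u/(1+u))·x̃_i + (1/(1+u))·(x*_i + (Aᵀ r*)_i) ; θ ) for every i ∈ {1,…,n}, and r* = y − A x* + b·r*. Then x* is a global minimizer of the GENP-LASSO objective f(z) = (1/2)‖y − Az‖₂² + λ‖z‖₁ + (τ/2)‖x̃ − z‖₂² with parameters λ = (1+u)·θ·(1−b) and τ = u·(1−b). -/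
/-!
The objective is convex, and the fixed-point equations are its first-order optimality condition.
Write `v` for the argument of the soft threshold. Since `η(·; θ)` is the proximal map of `θ|·|`,
`v i - xs i` is `θ` times a subgradient of `|·|` at `xs i` (`softThresh_subgradient`), while
`(1 + u) (v - xs) = u (xt - xs) + Aᵀ rs`. The residual equation gives `y - A xs = (1 - b) rs`, so
scaling by `1 - b > 0` turns this into the subgradient condition for the objective at `xs`.
Adding the tangent-line bounds for the two quadratic terms yields minimality.
-/

/-- Soft thresholding operator `η(x; θ)`. -/
noncomputable def softThresh (x θ : ℝ) : ℝ :=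
  if x > θ then x - θ else if x < -θ then x + θ else 0

/-- `x - η(x; θ)` is a subgradient of `θ|·|` at `η(x; θ)`. -/
theorem softThresh_subgradient (x θ w : ℝ) (hθ : 0 < θ) :
    (x - softThresh x θ) * (w - softThresh x θ) ≤ θ * (|w| - |softThresh x θ|) := by
  have h1 := le_abs_self w
  have h2 := neg_abs_le w
  unfold softThresh
  split_ifs with ha hb
  · rw [abs_of_pos (by linarith : 0 < x - θ)]
    nlinarith
  · rw [abs_of_neg (by linarith : x + θ < 0)]
    nlinarith
  · have hx : |x| ≤ θ := abs_le.2 ⟨by linarith, by linarith⟩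
    simp only [sub_zero, abs_zero]
    calc x * w ≤ |x * w| := le_abs_self _
      _ = |x| * |w| := abs_mul _ _
      _ ≤ θ * |w| := by gcongr

/-- If `(x*, r*)` is a fixed point of the GENP-AMP iteration with fixed parameters
`θ > 0`, `u ≥ 0`, `b < 1`, then `x*` is a global minimizer of the GENP-LASSO objective
with `λ = (1+u)·θ·(1−b)` and `τ = u·(1−b)`. -/
theorem genp_amp_fixed_point_is_genp_lasso_minimizer
    {m n : ℕ} (A : Matrix (Fin m) (Fin n) ℝ) (y : Fin m → ℝ) (xt : Fin n → ℝ)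
    (θ u b : ℝ) (hθ : 0 < θ) (hu : 0 ≤ u) (hb : b < 1)
    (xs : Fin n → ℝ) (rs : Fin m → ℝ)
    (hfix_x : ∀ i, xs i =
      softThresh ((u / (1 + u)) * xt i
        + (1 / (1 + u)) * (xs i + (A.transpose.mulVec rs) i)) θ)
    (hfix_r : ∀ j, rs j = y j - (A.mulVec xs) j + b * rs j) :
    ∀ z : Fin n → ℝ,
      (1/2) * ∑ j, (y j - (A.mulVec xs) j)^2
        + ((1 + u) * θ * (1 - b)) * ∑ i, |xs i|
        + ((u * (1 - b)) / 2) * ∑ i, (xt i - xs i)^2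
      ≤ (1/2) * ∑ j, (y j - (A.mulVec z) j)^2
        + ((1 + u) * θ * (1 - b)) * ∑ i, |z i|
        + ((u * (1 - b)) / 2) * ∑ i, (xt i - z i)^2 := by
  intro z
  have h1u : 0 < 1 + u := by linarith
  have h1b : 0 < 1 - b := by linarith
  have hcoord : ∀ i, (A.transpose.mulVec rs) i * (z i - xs i) + u * ((xt i - xs i) * (z i - xs i))
      ≤ (1 + u) * θ * (|z i| - |xs i|) := by
    intro i
    have h := softThresh_subgradient ((u / (1 + u)) * xt i
        + (1 / (1 + u)) * (xs i + (A.transpose.mulVec rs) i)) θ (z i) hθ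
    rw [← hfix_x i] at h
    have h' := mul_le_mul_of_nonneg_left h h1u.le
    have e : (1 + u) * (((u / (1 + u)) * xt i
        + (1 / (1 + u)) * (xs i + (A.transpose.mulVec rs) i) - xs i) * (z i - xs i))
        = (A.transpose.mulVec rs) i * (z i - xs i) + u * ((xt i - xs i) * (z i - xs i)) := by
      field_simp
      ring
    linarith
  have hadj : ∑ i, (A.transpose.mulVec rs) i * (z i - xs i)
      = ∑ j, rs j * ((A.mulVec z) j - (A.mulVec xs) j) := by
    have h : A.transpose.mulVec rs ⬝ᵥ (z - xs) = rs ⬝ᵥ A.mulVec (z - xs) := by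
      rw [Matrix.mulVec_transpose, Matrix.dotProduct_mulVec]
    rw [Matrix.mulVec_sub] at h
    simpa [dotProduct] using h
  have hpen : (1 - b) * ∑ j, rs j * ((A.mulVec z) j - (A.mulVec xs) j)
      + u * (1 - b) * ∑ i, (xt i - xs i) * (z i - xs i)
      ≤ (1 + u) * θ * (1 - b) * (∑ i, |z i| - ∑ i, |xs i|) := by
    have h := Finset.sum_le_sum fun i (_ : i ∈ Finset.univ) => hcoord i
    rw [Finset.sum_add_distrib, ← Finset.mul_sum, ← Finset.mul_sum, Finset.sum_sub_distrib,
      hadj] at h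
    have h' := mul_le_mul_of_nonneg_left h h1b.le
    linarith
  have hfit : ∑ j, (y j - (A.mulVec xs) j) ^ 2
      ≤ ∑ j, (y j - (A.mulVec z) j) ^ 2
        + 2 * (1 - b) * ∑ j, rs j * ((A.mulVec z) j - (A.mulVec xs) j) := by
    rw [Finset.mul_sum, ← Finset.sum_add_distrib]
    refine Finset.sum_le_sum fun j _ => ?_
    have hr : y j - (A.mulVec xs) j = (1 - b) * rs j := by linarith [hfix_r j]
    have hz : y j - (A.mulVec z) j
        = (1 - b) * rs j - ((A.mulVec z) j - (A.mulVec xs) j) := by linarith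
    rw [hr, hz]
    nlinarith [sq_nonneg ((A.mulVec z) j - (A.mulVec xs) j)]
  have hprior : ∑ i, (xt i - xs i) ^ 2
      ≤ ∑ i, (xt i - z i) ^ 2 + 2 * ∑ i, (xt i - xs i) * (z i - xs i) := by
    rw [Finset.mul_sum, ← Finset.sum_add_distrib]
    refine Finset.sum_le_sum fun i _ => ?_
    nlinarith [sq_nonneg (z i - xs i)]
  have hprior' := mul_le_mul_of_nonneg_left hprior (mul_nonneg hu h1b.le)
  linarith
end

section
/- Let Z be a standard Gaussian random variable (law N(0,1)) and let α ≥ 0. Then E[η(Z; α)²] = 2(1 + α²)·Φ(−α) − 2α·φ(α), where φ(z) = exp(−z²/2)/√(2π) and Φ(z) = ∫_{−∞}^z φ(t) dt. -/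
/-!
The integrand `η(z; α)² φ(z)` is even and vanishes on `[-α, α]`, so the expectation equals
`2 ∫_{z > α} (z - α)² φ(z) dz`. Since `dφ/dz = -z φ(z)`,
`(z - α)² φ(z) = (1 + α²) φ(z) + d/dz [(2α - z) φ(z)]`,
and the tail integral of the right-hand side is `(1 + α²) Φ(-α) - α φ(α)`.
-/
open MeasureTheory ProbabilityTheory

/-- The standard normal density `φ`. -/
noncomputable def stdGaussianPdf (z : ℝ) : ℝ :=
  Real.exp (-z^2 / 2) / Real.sqrt (2 * Real.pi)

/-- The standard normal cumulative distribution function `Φ`. -/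
noncomputable def stdGaussianCdf (z : ℝ) : ℝ :=
  ∫ t in Set.Iic z, stdGaussianPdf t

lemma stdGaussianPdf_neg (z : ℝ) : stdGaussianPdf (-z) = stdGaussianPdf z := by
  simp [stdGaussianPdf]

lemma stdGaussianPdf_abs (z : ℝ) : stdGaussianPdf |z| = stdGaussianPdf z := by
  simp [stdGaussianPdf]

lemma softThresh_abs_sq {α : ℝ} (hα : 0 ≤ α) (z : ℝ) :
    softThresh |z| α ^ 2 = softThresh z α ^ 2 := by
  unfold softThresh
  rcases abs_cases z with ⟨h, h'⟩ | ⟨h, h'⟩ <;> rw [h] <;> split_ifs <;>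
    first | (exfalso; linarith) | ring

lemma hasDerivAt_stdGaussianPdf (z : ℝ) :
    HasDerivAt stdGaussianPdf (-z * stdGaussianPdf z) z := by
  have h : HasDerivAt (fun x : ℝ => -x ^ 2 / 2) (-z) z := by
    refine ((hasDerivAt_pow 2 z).neg.div_const 2).congr_deriv ?_
    norm_num
    ring
  refine (h.exp.div_const (Real.sqrt (2 * Real.pi))).congr_deriv ?_
  unfold stdGaussianPdf
  ring

lemma integrable_stdGaussianPdf : Integrable stdGaussianPdf := by
  convert (integrable_exp_neg_mul_sq (b := 1 / 2) (by norm_num)).div_const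
    (Real.sqrt (2 * Real.pi)) using 2 with x
  unfold stdGaussianPdf
  ring_nf

lemma integrable_mul_stdGaussianPdf : Integrable (fun x => x * stdGaussianPdf x) := by
  convert (integrable_mul_exp_neg_mul_sq (b := 1 / 2) (by norm_num)).div_const
    (Real.sqrt (2 * Real.pi)) using 2 with x
  unfold stdGaussianPdf
  ring_nf

lemma integrable_sq_mul_stdGaussianPdf : Integrable (fun x => x ^ 2 * stdGaussianPdf x) := by
  convert (integrable_rpow_mul_exp_neg_mul_sq (b := 1 / 2) (by norm_num)
    (s := 2) (by norm_num)).div_const (Real.sqrt (2 * Real.pi)) using 2 with x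
  unfold stdGaussianPdf
  rw [Real.rpow_two]
  ring_nf

lemma integral_Ioi_stdGaussianPdf (α : ℝ) :
    ∫ x in Set.Ioi α, stdGaussianPdf x = stdGaussianCdf (-α) := by
  have h := integral_comp_neg_Iic (-α) stdGaussianPdf
  simp only [stdGaussianPdf_neg, neg_neg] at h
  exact h.symm

/-- The one-sided second moment of the excess over `α`, by exhibiting `(2α - x) φ(x)` as an
antiderivative of `(x - α)² φ(x) - (1 + α²) φ(x)`. -/
lemma integral_Ioi_sq_mul_stdGaussianPdf (α : ℝ) :
    ∫ x in Set.Ioi α, (x - α) ^ 2 * stdGaussianPdf x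
      = (1 + α ^ 2) * stdGaussianCdf (-α) - α * stdGaussianPdf α := by
  let F : ℝ → ℝ := fun x => (2 * α - x) * stdGaussianPdf x
  let dF : ℝ → ℝ := fun x => (x - α) ^ 2 * stdGaussianPdf x - (1 + α ^ 2) * stdGaussianPdf x
  have hderiv : ∀ x, HasDerivAt F (dF x) x := fun x => by
    refine (((hasDerivAt_id x).const_sub (2 * α)).mul
      (hasDerivAt_stdGaussianPdf x)).congr_deriv ?_
    simp only [dF, id]
    ring
  have hF : Integrable F := by
    convert (integrable_stdGaussianPdf.const_mul (2 * α)).sub integrable_mul_stdGaussianPdf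
      using 1
    ext x
    simp only [F, Pi.sub_apply]
    ring
  have hsq : Integrable (fun x => (x - α) ^ 2 * stdGaussianPdf x) := by
    refine ((integrable_sq_mul_stdGaussianPdf.sub
      (integrable_mul_stdGaussianPdf.const_mul (2 * α))).add
      (integrable_stdGaussianPdf.const_mul (α ^ 2))).congr (ae_of_all _ fun x => ?_)
    simp only [Pi.sub_apply, Pi.add_apply]
    ring
  have hc := integrable_stdGaussianPdf.const_mul (1 + α ^ 2)
  have hdF : Integrable dF := hsq.sub hc
  -- `F` and `dF` are both integrable, which forces `F → 0` at infinity.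
  have hlim : Filter.Tendsto F Filter.atTop (nhds 0) :=
    tendsto_zero_of_hasDerivAt_of_integrableOn_Ioi (a := α) (fun x _ => hderiv x)
      hdF.integrableOn hF.integrableOn
  have key := integral_Ioi_of_hasDerivAt_of_tendsto' (a := α) (fun x _ => hderiv x)
    hdF.integrableOn hlim
  simp only [dF, F] at key
  rw [integral_sub hsq.integrableOn hc.integrableOn, integral_const_mul,
    integral_Ioi_stdGaussianPdf] at key
  linarith

/-- For `Z ~ N(0,1)` and `α ≥ 0`,
`E[η(Z; α)²] = 2(1 + α²)·Φ(−α) − 2α·φ(α)`. -/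
theorem soft_thresholding_mse_at_zero_signal (α : ℝ) (hα : 0 ≤ α) :
    ∫ z, (softThresh z α)^2 ∂(gaussianReal 0 1)
      = 2 * (1 + α^2) * stdGaussianCdf (-α) - 2 * α * stdGaussianPdf α := by
  have hpdf : ∀ z, gaussianPDFReal 0 1 z = stdGaussianPdf z := fun z => by
    simp [gaussianPDFReal, stdGaussianPdf, div_eq_mul_inv, mul_comm]
  rw [integral_gaussianReal_eq_integral_smul one_ne_zero]
  simp only [hpdf, smul_eq_mul]
  have habs := integral_comp_abs (f := fun z => stdGaussianPdf z * softThresh z α ^ 2)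
  simp only [stdGaussianPdf_abs, softThresh_abs_sq hα] at habs
  have hsub : ∫ z in Set.Ioi 0, stdGaussianPdf z * softThresh z α ^ 2
      = ∫ z in Set.Ioi α, stdGaussianPdf z * softThresh z α ^ 2 := by
    refine setIntegral_eq_of_subset_of_forall_sdiff_eq_zero measurableSet_Ioi
      (Set.Ioi_subset_Ioi hα) fun z hz => ?_
    have h1 : 0 < z := hz.1
    have h2 : ¬ z > α := hz.2
    have h3 : ¬ z < -α := by linarith
    simp [softThresh, h2, h3]
  have hval : ∫ z in Set.Ioi α, stdGaussianPdf z * softThresh z α ^ 2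
      = ∫ z in Set.Ioi α, (z - α) ^ 2 * stdGaussianPdf z := by
    refine setIntegral_congr_fun measurableSet_Ioi fun z hz => ?_
    have h : z > α := hz
    simp [softThresh, h, mul_comm]
  rw [habs, hsub, hval, integral_Ioi_sq_mul_stdGaussianPdf]
  ring
end

section
/- Let Z be a standard Gaussian random variable (law N(0,1)) and let α ≥ 0. Then the function g(μ) = E[(η(μ + Z; α) − μ)²] satisfies lim_{μ → ∞} g(μ) = 1 + α². -/
open MeasureTheory ProbabilityTheory

lemma abs_softThresh_sub_le (x α : ℝ) (hα : 0 ≤ α) : |softThresh x α - x| ≤ α := by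
  unfold softThresh
  split_ifs <;> rw [abs_le] <;> constructor <;> linarith

lemma measurable_softThresh (α : ℝ) : Measurable (fun x => softThresh x α) := by
  unfold softThresh
  exact Measurable.ite measurableSet_Ioi (by fun_prop)
    (Measurable.ite measurableSet_Iio (by fun_prop) (by fun_prop))

lemma integrable_sq_gaussianReal : Integrable (fun z : ℝ => z ^ 2) (gaussianReal 0 1) :=
  (memLp_id_gaussianReal 2).integrable_sq

lemma integral_sq_gaussianReal : ∫ z : ℝ, z ^ 2 ∂(gaussianReal 0 1) = 1 := by
  have h := variance_id_gaussianReal (μ := 0) (v := 1)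
  rw [variance_of_integral_eq_zero aemeasurable_id (by simp)] at h
  simpa using h

lemma integral_sub_sq_gaussianReal (α : ℝ) :
    ∫ z : ℝ, (z - α) ^ 2 ∂(gaussianReal 0 1) = 1 + α ^ 2 := by
  have hid : Integrable (fun z : ℝ => z) (gaussianReal 0 1) :=
    (memLp_id_gaussianReal 1).integrable (by norm_num)
  have hlin : Integrable (fun z : ℝ => 2 * α * z) (gaussianReal 0 1) := hid.const_mul _
  have hexp : ∀ z : ℝ, (z - α) ^ 2 = z ^ 2 - 2 * α * z + α ^ 2 := fun z => by ring
  have hsub : Integrable (fun z : ℝ => z ^ 2 - 2 * α * z) (gaussianReal 0 1) :=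
    integrable_sq_gaussianReal.sub hlin
  simp_rw [hexp]
  rw [integral_add hsub (integrable_const _),
    integral_sub integrable_sq_gaussianReal hlin, integral_const_mul, integral_sq_gaussianReal,
    integral_id_gaussianReal]
  simp

/-- For `Z ~ N(0,1)` and `α ≥ 0`, the soft-thresholding MSE
`g(μ) = E[(η(μ + Z; α) − μ)²]` tends to `1 + α²` as `μ → ∞`. -/
theorem soft_thresholding_mse_tendsto_atTop (α : ℝ) (hα : 0 ≤ α) :
    Filter.Tendsto
      (fun μ : ℝ => ∫ z, (softThresh (μ + z) α - μ)^2 ∂(gaussianReal 0 1))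
      Filter.atTop (nhds (1 + α^2)) := by
  rw [← integral_sub_sq_gaussianReal α]
  refine tendsto_integral_filter_of_dominated_convergence (fun z => 2 * z ^ 2 + 2 * α ^ 2)
    (Filter.Eventually.of_forall fun μ => ?_)
    (Filter.Eventually.of_forall fun μ => Filter.Eventually.of_forall fun z => ?_)
    ((integrable_sq_gaussianReal.const_mul 2).add (integrable_const _))
    (Filter.Eventually.of_forall fun z => ?_)
  · have hm : Measurable (fun z => softThresh (μ + z) α) :=
      (measurable_softThresh α).comp (measurable_const_add μ)
    exact ((hm.sub_const μ).pow_const 2).aestronglyMeasurable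
  · rw [Real.norm_of_nonneg (sq_nonneg _)]
    have hsq := sq_le_sq' (abs_le.mp (abs_softThresh_sub_le (μ + z) α hα)).1
      (abs_le.mp (abs_softThresh_sub_le (μ + z) α hα)).2
    -- With `d = η(μ + z) - (μ + z)`, the error is `d + z`, and `(d + z)² ≤ 2d² + 2z²`.
    nlinarith [sq_nonneg (softThresh (μ + z) α - (μ + z) - z)]
  · refine tendsto_const_nhds.congr' ?_
    filter_upwards [Filter.eventually_gt_atTop (α - z)] with μ hμ
    rw [softThresh, if_pos (by linarith)]
    ring
end

section
/- Let Z be a standard Gaussian random variable (law N(0,1)) and let α ≥ 0. Then the function g(μ) = E[(η(μ + Z; α) − μ)²] is monotone nondecreasing on [0, ∞). -/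
/-!
The monotonicity already holds pointwise in the noise: `η(μ + z; α) - μ` is the projection of `-μ`
onto the interval `[z - α, z + α]`. As `μ ≥ 0` grows, `-μ` moves away from `0` through the
nonpositive reals, so its projection either stays constant (when the interval lies to the right of
`-μ`) or is nonpositive and nonincreasing; in every case its square is nondecreasing
(`sq_softThresh_sub_le`). Since `|η(μ + z; α) - μ| ≤ |z| + α` the squares are integrable against the
Gaussian law, and integrating gives the theorem.
-/

open MeasureTheory ProbabilityTheory

/-- The estimation error is the projection of `-μ` onto `[z - α, z + α]`. -/
lemma softThresh_sub_eq {α : ℝ} (hα : 0 ≤ α) (μ z : ℝ) :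
    softThresh (μ + z) α - μ = max (z - α) (min (-μ) (z + α)) := by
  unfold softThresh
  grind

lemma sq_softThresh_sub_le {α a b : ℝ} (hα : 0 ≤ α) (ha : 0 ≤ a) (hab : a ≤ b) (z : ℝ) :
    (softThresh (a + z) α - a) ^ 2 ≤ (softThresh (b + z) α - b) ^ 2 := by
  rw [softThresh_sub_eq hα, softThresh_sub_eq hα, sq_le_sq]
  grind

lemma integrable_sq_softThresh_sub {α : ℝ} (hα : 0 ≤ α) (μ : ℝ) :
    Integrable (fun z => (softThresh (μ + z) α - μ) ^ 2) (gaussianReal 0 1) := by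
  have hbound : MemLp (fun z : ℝ => |z| + α) 2 (gaussianReal 0 1) :=
    (memLp_id_gaussianReal' 2 (by simp)).abs.add (memLp_const α)
  refine (hbound.mono ?_ (ae_of_all _ fun z => ?_)).integrable_sq
  · simp_rw [softThresh_sub_eq hα]
    exact Continuous.aestronglyMeasurable (by fun_prop)
  · rw [softThresh_sub_eq hα, Real.norm_eq_abs, Real.norm_eq_abs]
    grind

/-- For `Z ~ N(0,1)` and `α ≥ 0`, the soft-thresholding MSE
`g(μ) = E[(η(μ + Z; α) − μ)²]` is monotone nondecreasing on `[0, ∞)`. -/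
theorem soft_thresholding_mse_monotone (α : ℝ) (hα : 0 ≤ α) :
    MonotoneOn
      (fun μ : ℝ => ∫ z, (softThresh (μ + z) α - μ)^2 ∂(gaussianReal 0 1))
      (Set.Ici 0) := by
  intro a ha b _ hab
  exact integral_mono (integrable_sq_softThresh_sub hα a) (integrable_sq_softThresh_sub hα b)
    (sq_softThresh_sub_le hα ha hab)
end

section
/- Let δ > 0, γ > 0 and M > 0, and let q ≥ 0 satisfy q² ≤ M · γ²·(1 + q²/δ) / (γ² + 1 + q²/δ). Then q² ≤ (−G + √(G² + 4δγ²M)) / 2, where G = δγ² + δ − γ²M. -/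
/-- Key algebraic step bounding the minimax risk of GENP-LASSO: if
`q² ≤ M·γ²(1 + q²/δ)/(γ² + 1 + q²/δ)` then
`q² ≤ (−G + √(G² + 4δγ²M))/2` with `G = δγ² + δ − γ²M`. -/
theorem genp_lasso_minimax_upper_bound
    (δ γ M q : ℝ) (hδ : 0 < δ) (hγ : 0 < γ) (hM : 0 < M) (hq : 0 ≤ q)
    (h : q^2 ≤ M * (γ^2 * (1 + q^2/δ)) / (γ^2 + 1 + q^2/δ)) :
    q^2 ≤ (-(δ*γ^2 + δ - γ^2*M)
        + Real.sqrt ((δ*γ^2 + δ - γ^2*M)^2 + 4*δ*γ^2*M)) / 2 := by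
  rw [le_div_iff₀ (by positivity)] at h
  -- Multiplying by `δ` clears the inner fractions and gives `x² + G x ≤ δγ²M` for `x = q²`.
  have hquad : (q^2)^2 + (δ*γ^2 + δ - γ^2*M) * q^2 ≤ δ*γ^2*M := by
    have hmul := mul_le_mul_of_nonneg_left h hδ.le
    have hdiv : δ * (q^2/δ) = q^2 := mul_div_cancel₀ _ hδ.ne'
    linear_combination hmul + (M*γ^2 - q^2) * hdiv
  -- Completing the square: `(2x + G)² ≤ G² + 4δγ²M`.
  have hsqrt : 2*q^2 + (δ*γ^2 + δ - γ^2*M)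
      ≤ Real.sqrt ((δ*γ^2 + δ - γ^2*M)^2 + 4*δ*γ^2*M) :=
    Real.le_sqrt_of_sq_le (by linear_combination 4 * hquad)
  linarith
end

section
/- Let δ > 0, γ > 0 and M > 0, and let q ≥ 0 satisfy q² ≥ M · γ²·(1 + q²/δ) / (γ² + 1 + q²/δ). Then q² ≥ (−G + √(G² + 4δγ²M)) / 2, where G = δγ² + δ − γ²M. -/
/-!
With `x = q²` and `G = δγ² + δ − γ²M`, the hypothesis is the quadratic inequality
`x² + G x − δγ²M ≥ 0`. Its two roots have negative product `−δγ²M`, so a nonnegative `x`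
satisfying it lies at or above the larger root, which is the claimed bound.
-/

/-- Matching lower-bound step for the minimax risk of GENP-LASSO: if
`q² ≥ M·γ²(1 + q²/δ)/(γ² + 1 + q²/δ)` then
`q² ≥ (−G + √(G² + 4δγ²M))/2` with `G = δγ² + δ − γ²M`. -/
theorem genp_lasso_minimax_lower_bound
    (δ γ M q : ℝ) (hδ : 0 < δ) (hγ : 0 < γ) (hM : 0 < M) (hq : 0 ≤ q)
    (h : q^2 ≥ M * (γ^2 * (1 + q^2/δ)) / (γ^2 + 1 + q^2/δ)) :
    q^2 ≥ (-(δ*γ^2 + δ - γ^2*M)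
        + Real.sqrt ((δ*γ^2 + δ - γ^2*M)^2 + 4*δ*γ^2*M)) / 2 := by
  have hx : 0 ≤ q^2 := sq_nonneg q
  have hp : 0 < δ*γ^2*M := by positivity
  -- Clearing denominators gives the quadratic inequality `x² + G x ≥ δγ²M` for `x = q²`.
  have hquad : δ*γ^2*M ≤ q^2 * (q^2 + (δ*γ^2 + δ - γ^2*M)) := by
    rw [ge_iff_le, div_le_iff₀ (by positivity)] at h
    have h' := mul_le_mul_of_nonneg_left h hδ.le
    have hd : δ * (q^2/δ) = q^2 := by field_simp
    linear_combination h' + (q^2 - M*γ^2) * hd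
  -- As `x ≥ 0` and `x (x + G) > 0`, also `x + G > 0`, so `2x + G` is the nonnegative root.
  have hpos : 0 < q^2 + (δ*γ^2 + δ - γ^2*M) :=
    pos_of_mul_pos_right (hp.trans_le hquad) hx
  have hs : Real.sqrt ((δ*γ^2 + δ - γ^2*M)^2 + 4*δ*γ^2*M)
      ≤ 2*q^2 + (δ*γ^2 + δ - γ^2*M) := by
    apply Real.sqrt_le_iff.mpr
    constructor
    · linarith
    · linear_combination 4 * hquad
  linarith
end

section
/- Fix δ > 0 and m with 0 < m ≤ 1, and define M*(δ, m, g) = (−G + √(G² + 4δ·g·m)) / 2 for g > 0, where G = δ·g + δ − g·m. Then the function g ↦ M*(δ, m, g) is strictly increasing on (0, ∞). -/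
/-!
The value `x = M*(δ, m, g)` is the positive root of `q_g(x) = x² + Gx − δgm`, which, grouped by
powers of `g`, reads `q_g(x) = x² + δx − g(δm + mx − δx)`. At the root for `g = a > 0`, the bracket
`δm + mx − δx` equals `(x² + δx)/a > 0`, so `q_b(x) < q_a(x) = 0` for every `b > a`. Hence `x` lies
strictly below the larger root of `q_b`, which is `M*(δ, m, b)`.
-/

/-- The GENP-LASSO minimax noise sensitivity
`M*(δ, m, g) = (−G + √(G² + 4δgm))/2`, `G = δg + δ − gm`,
is strictly increasing in the noise-variance ratio `g` on `(0, ∞)`. -/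
theorem genp_lasso_minimax_strictMono_in_gamma
    (δ m : ℝ) (hδ : 0 < δ) (hm0 : 0 < m) (hm1 : m ≤ 1) :
    StrictMonoOn
      (fun g : ℝ => (-(δ*g + δ - g*m)
          + Real.sqrt ((δ*g + δ - g*m)^2 + 4*δ*g*m)) / 2)
      (Set.Ioi 0) := by
  intro a ha b _ hab
  have ha : 0 < a := ha
  have hpos : 0 < 4*δ*a*m := by positivity
  have hsq := Real.sq_sqrt (show 0 ≤ (δ*a + δ - a*m)^2 + 4*δ*a*m by positivity)
  have hgt : δ*a + δ - a*m < Real.sqrt ((δ*a + δ - a*m)^2 + 4*δ*a*m) :=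
    Real.lt_sqrt_of_sq_lt (by linarith)
  dsimp only
  generalize Real.sqrt ((δ*a + δ - a*m)^2 + 4*δ*a*m) = s at hsq hgt ⊢
  obtain ⟨x, hx⟩ : ∃ x, x = (-(δ*a + δ - a*m) + s) / 2 := ⟨_, rfl⟩
  rw [← hx]
  have hx0 : 0 < x := by linarith
  obtain rfl : s = 2*x + (δ*a + δ - a*m) := by linarith
  have hroot : a * (δ*m + m*x - δ*x) = x^2 + δ*x := by linarith
  have hK : 0 < δ*m + m*x - δ*x :=
    pos_of_mul_pos_right (hroot ▸ (by positivity : 0 < x^2 + δ*x)) ha.le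
  have hlt := mul_pos (sub_pos.2 hab) hK
  -- `(2x + G)² − (G² + 4δbm) = 4 q_b(x)`, so `q_b(x) < 0` bounds `2x + G` by the square root.
  have : 2*x + (δ*b + δ - b*m) < Real.sqrt ((δ*b + δ - b*m)^2 + 4*δ*b*m) :=
    Real.lt_sqrt_of_sq_lt (by linarith)
  linarith
end

section
/- Let δ > 0, γ > 0 and m with 0 < m < δ, and define M*(δ, m, γ²) = (−G + √(G² + 4δγ²m)) / 2 with G = δγ² + δ − γ²m. Then M*(δ, m, γ²) ≤ m / (1 − m/δ); that is, the minimax risk bound of GENP-LASSO never exceeds the LASSO minimax risk bound M^b = M^±/(1 − M^±/δ). -/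
/-- The GENP-LASSO minimax risk bound never exceeds the LASSO minimax risk bound:
for `0 < m < δ`, `M*(δ, m, γ²) ≤ m/(1 − m/δ)`. -/
theorem genp_lasso_minimax_le_lasso_bound
    (δ γ m : ℝ) (hδ : 0 < δ) (hγ : 0 < γ) (hm0 : 0 < m) (hmδ : m < δ) :
    (-(δ*γ^2 + δ - γ^2*m)
        + Real.sqrt ((δ*γ^2 + δ - γ^2*m)^2 + 4*δ*γ^2*m)) / 2
      ≤ m / (1 - m/δ) := by
  have hd : 0 < δ - m := sub_pos.mpr hmδ
  have hden : 0 < 1 - m/δ := sub_pos.mpr ((div_lt_one hδ).mpr hmδ)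
  obtain ⟨B, hB⟩ : ∃ B, B = m / (1 - m/δ) := ⟨_, rfl⟩
  have hBpos : 0 < B := hB ▸ div_pos hm0 hden
  have hBmul : B * (δ - m) = m * δ := by
    rw [hB]
    field_simp
  have hG : 0 < δ*γ^2 + δ - γ^2*m := by
    have : 0 < γ^2 * (δ - m) := by positivity
    linarith
  rw [← hB]
  -- The left side is the positive root of `x² + G x - δγ²m`, and since `B (δ - m) = m δ`,
  -- this quadratic takes the value `B² + δ B ≥ 0` at `B`.
  have key : Real.sqrt ((δ*γ^2 + δ - γ^2*m)^2 + 4*δ*γ^2*m)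
      ≤ 2 * B + (δ*γ^2 + δ - γ^2*m) := by
    apply Real.sqrt_le_iff.mpr
    refine ⟨by positivity, ?_⟩
    have h1 : 0 < B^2 + δ * B := by positivity
    linear_combination 4 * h1 - 4 * γ^2 * hBmul
  linarith
end

section
/- Let δ > 0, γ > 0 and m ≥ 0, and define M*(δ, m, γ²) = (−G + √(G² + 4δγ²m)) / 2 with G = δγ² + δ − γ²m. Then M*(δ, m, γ²) ≤ m·γ²; that is, the minimax risk bound of GENP-LASSO never exceeds the minimax risk M^±(δρ)·γ_s² of scalar denoising of the side-information prior alone. -/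
/-- The GENP-LASSO minimax risk bound never exceeds the scalar-denoising minimax
risk of the side-information prior alone: `M*(δ, m, γ²) ≤ m·γ²`. -/
theorem genp_lasso_minimax_le_denoising_bound
    (δ γ m : ℝ) (hδ : 0 < δ) (hγ : 0 < γ) (hm : 0 ≤ m) :
    (-(δ*γ^2 + δ - γ^2*m)
        + Real.sqrt ((δ*γ^2 + δ - γ^2*m)^2 + 4*δ*γ^2*m)) / 2
      ≤ m * γ^2 := by
  -- After isolating the root and squaring, the gap is `4 * δ * γ ^ 4 * m ≥ 0`.
  have hsqrt : Real.sqrt ((δ*γ^2 + δ - γ^2*m)^2 + 4*δ*γ^2*m)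
      ≤ δ*γ^2 + δ + γ^2*m := by
    apply Real.sqrt_le_iff.mpr
    have hgap : 0 ≤ δ * γ^4 * m := by positivity
    exact ⟨by positivity, by linarith⟩
  linarith
end

section
/- Fix γ > 0 and m with 0 < m ≤ 1, and define f(δ) = (−G(δ) + √(G(δ)² + 4δγ²m)) / 2 for δ ≥ 0, where G(δ) = δγ² + δ − γ²m. Then f is monotone nonincreasing on [0, ∞); in particular f(δ) ≤ f(0) = m·γ² for every δ ≥ 0, so adding compressed measurements (increasing δ at fixed sparsity parameter m) never increases the GENP-LASSO minimax risk bound. -/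
/-!
Write `g = γ²`. The value `x = f(δ)` is the larger root of
`q_δ(X) = X² + G(δ) X - δ g m = X² - g m X + δ ((g + 1) X - g m)`.
At `x₀ = g m / (g + 1)` one has `q_δ(x₀) = x₀ (x₀ - g m) ≤ 0`, so `x ≥ x₀`, i.e.
`(g + 1) x - g m ≥ 0`. Hence, for `δ ≤ δ'`, `q_δ'(x) = (δ' - δ) ((g + 1) x - g m) ≥ 0`, and
since `x` also lies to the right of the vertex of `q_δ'`, it dominates the larger root `f(δ')`.
-/

/-- The larger root of `q_δ` is at least `g m / (g + 1)`, the point at which `q_δ` does not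
depend on `δ`. -/
lemma root_lower_bound (g m d : ℝ) (hg : 0 < g) (hm : 0 < m) :
    g * m ≤ (g + 1) * ((-(d*g + d - g*m)
      + Real.sqrt ((d*g + d - g*m)^2 + 4*d*g*m)) / 2) := by
  have hg1 : 0 < g + 1 := by linarith
  obtain ⟨x, hx⟩ : ∃ x, x = g * m / (g + 1) := ⟨_, rfl⟩
  have hx1 : (g + 1) * x = g * m := by rw [hx]; field_simp
  have hx0 : 0 < x := by rw [hx]; positivity
  have hle : 2 * x + (d*g + d - g*m) ≤ Real.sqrt ((d*g + d - g*m)^2 + 4*d*g*m) := by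
    apply Real.le_sqrt_of_sq_le
    have hq : (2 * x + (d*g + d - g*m))^2
        = (d*g + d - g*m)^2 + 4*d*g*m - 4 * (g * x * x) := by
      linear_combination (4 * d + 4 * x) * hx1
    have : 0 < g * x * x := by positivity
    linarith
  have := mul_le_mul_of_nonneg_left hle hg1.le
  linarith

lemma root_antitone (g m a b : ℝ) (hg : 0 < g) (hm : 0 < m) (ha : 0 ≤ a) (hab : a ≤ b) :
    (-(b*g + b - g*m) + Real.sqrt ((b*g + b - g*m)^2 + 4*b*g*m)) / 2
      ≤ (-(a*g + a - g*m) + Real.sqrt ((a*g + a - g*m)^2 + 4*a*g*m)) / 2 := by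
  have hlow := root_lower_bound g m a hg hm
  have hsq : Real.sqrt ((a*g + a - g*m)^2 + 4*a*g*m) ^ 2 = (a*g + a - g*m)^2 + 4*a*g*m :=
    Real.sq_sqrt (by positivity)
  have hs0 := Real.sqrt_nonneg ((a*g + a - g*m)^2 + 4*a*g*m)
  generalize Real.sqrt ((a*g + a - g*m)^2 + 4*a*g*m) = s at *
  obtain ⟨x, hx⟩ : ∃ x, x = (-(a*g + a - g*m) + s) / 2 := ⟨_, rfl⟩
  rw [← hx] at hlow ⊢
  obtain rfl : s = 2 * x + (a*g + a - g*m) := by linarith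
  have hba : 0 ≤ (b - a) * g := mul_nonneg (by linarith) hg.le
  have hle : Real.sqrt ((b*g + b - g*m)^2 + 4*b*g*m) ≤ 2 * x + (b*g + b - g*m) := by
    apply Real.sqrt_le_iff.mpr
    refine ⟨by linarith, ?_⟩
    have hq : 0 ≤ (b - a) * ((g + 1) * x - g * m) :=
      mul_nonneg (by linarith) (by linarith)
    linarith
  linarith

/-- For fixed `γ > 0` and `0 < m ≤ 1`, the GENP-LASSO minimax risk bound
`f(δ) = (−G(δ) + √(G(δ)² + 4δγ²m))/2`, `G(δ) = δγ² + δ − γ²m`, is monotone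
nonincreasing in the sampling ratio `δ` on `[0, ∞)`; in particular
`f(δ) ≤ f(0) = m·γ²` for every `δ ≥ 0`. -/
theorem genp_lasso_minimax_antitone_in_delta
    (γ m : ℝ) (hγ : 0 < γ) (hm0 : 0 < m) (hm1 : m ≤ 1) :
    AntitoneOn
      (fun δ : ℝ => (-(δ*γ^2 + δ - γ^2*m)
          + Real.sqrt ((δ*γ^2 + δ - γ^2*m)^2 + 4*δ*γ^2*m)) / 2)
      (Set.Ici 0) ∧
    (-(0*γ^2 + 0 - γ^2*m)
        + Real.sqrt ((0*γ^2 + 0 - γ^2*m)^2 + 4*0*γ^2*m)) / 2 = m * γ^2 ∧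
    (∀ δ : ℝ, 0 ≤ δ →
      (-(δ*γ^2 + δ - γ^2*m)
          + Real.sqrt ((δ*γ^2 + δ - γ^2*m)^2 + 4*δ*γ^2*m)) / 2 ≤ m * γ^2) := by
  have hg : 0 < γ^2 := by positivity
  have hzero : (-(0*γ^2 + 0 - γ^2*m)
        + Real.sqrt ((0*γ^2 + 0 - γ^2*m)^2 + 4*0*γ^2*m)) / 2 = m * γ^2 := by
    have h : (0*γ^2 + 0 - γ^2*m)^2 + 4*0*γ^2*m = (γ^2*m)^2 := by ring
    rw [h, Real.sqrt_sq (by positivity)]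
    ring
  refine ⟨fun a ha b _ hab => root_antitone _ m a b hg hm0 ha hab, hzero, fun d hd => ?_⟩
  rw [← hzero]
  exact root_antitone _ m 0 d hg hm0 le_rfl hd
end
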